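/- For every positive integer n and every Ferrers board F ∈ F_n with height sequence h_0…h_{2n} of its border D_F: if max_i h_i ≥ 5 then there are no matchings of shape F avoiding both 123 and 321, and if max_i h_i ≤ 4 then the number of matchings of shape F avoiding both 123 and 321 equals 2^{η(F)}, where η(F) = |{i : h_i = 2}|. Consequently, for every n ≥ 1 the total number of matchings of [2n] avoiding both 123 and 321 is (5^{n−1} + 1)/2, and Σ_{n≥0} |M_n(123,321)| zⁿ = (1−5z+2z²)/(1−6z+5z²). -/

import Mathlib

/-! ### Patterns of length 3 and 4 as permutations (0-indexed values) -/

def p123 : Equiv.Perm (Fin 3) :=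
  ⟨![0,1,2], ![0,1,2], by intro x; fin_cases x <;> rfl, by intro x; fin_cases x <;> rfl⟩
def p132 : Equiv.Perm (Fin 3) :=
  ⟨![0,2,1], ![0,2,1], by intro x; fin_cases x <;> rfl, by intro x; fin_cases x <;> rfl⟩
def p213 : Equiv.Perm (Fin 3) :=
  ⟨![1,0,2], ![1,0,2], by intro x; fin_cases x <;> rfl, by intro x; fin_cases x <;> rfl⟩
def p231 : Equiv.Perm (Fin 3) :=
  ⟨![1,2,0], ![2,0,1], by intro x; fin_cases x <;> rfl, by intro x; fin_cases x <;> rfl⟩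
def p312 : Equiv.Perm (Fin 3) :=
  ⟨![2,0,1], ![1,2,0], by intro x; fin_cases x <;> rfl, by intro x; fin_cases x <;> rfl⟩
def p321 : Equiv.Perm (Fin 3) :=
  ⟨![2,1,0], ![2,1,0], by intro x; fin_cases x <;> rfl, by intro x; fin_cases x <;> rfl⟩
def p1342 : Equiv.Perm (Fin 4) :=
  ⟨![0,2,3,1], ![0,3,1,2], by intro x; fin_cases x <;> rfl, by intro x; fin_cases x <;> rfl⟩
def p1324 : Equiv.Perm (Fin 4) :=
  ⟨![0,2,1,3], ![0,2,1,3], by intro x; fin_cases x <;> rfl, by intro x; fin_cases x <;> rfl⟩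

/-! ### Perfect matchings of `[2n] = {1, …, 2n}` as finsets of pairs `(i,j)`, `i < j` -/

/-- `M` is a perfect matching of `{1, …, 2n}`. -/
def IsPerfectMatching (n : ℕ) (M : Finset (ℕ × ℕ)) : Prop :=
  (∀ p ∈ M, p.1 < p.2 ∧ 1 ≤ p.1 ∧ p.2 ≤ 2 * n) ∧
  ∀ x, 1 ≤ x → x ≤ 2 * n → ∃! p, p ∈ M ∧ (p.1 = x ∨ p.2 = x)

/-- The matching `M` contains the pattern `τ ∈ S_k`: there are
`i_1 < i_2 < ⋯ < i_{2k}` with `(i_a, i_{2k+1-τ(a)}) ∈ M` for all `1 ≤ a ≤ k`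
(written here 0-indexed). -/
def MatchContains {k : ℕ} (τ : Equiv.Perm (Fin k)) (M : Finset (ℕ × ℕ)) : Prop :=
  ∃ f : Fin (2 * k) → ℕ, StrictMono f ∧
    ∀ a : Fin k,
      (f ⟨a.1, by have := a.isLt; omega⟩,
       f ⟨2 * k - 1 - (τ a).1, by have := (τ a).isLt; omega⟩) ∈ M

def MatchAvoids {k : ℕ} (τ : Equiv.Perm (Fin k)) (M : Finset (ℕ × ℕ)) : Prop :=
  ¬ MatchContains τ M

/-! ### Dyck paths as lists of booleans (`true` = east step, `false` = south step) -/

/-- A Dyck path of semilength `n`, from `(0,n)` to `(n,0)`, staying weakly above `y = n - x`. -/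
def IsDyckPath (n : ℕ) (t : List Bool) : Prop :=
  t.length = 2 * n ∧ t.count true = n ∧
  ∀ i, (t.take i).count false ≤ (t.take i).count true

/-- The height (distance above the diagonal) of the `i`-th vertex of the path `t`. -/
def pathHeight (t : List Bool) (i : ℕ) : ℤ :=
  ((t.take i).count true : ℤ) - ((t.take i).count false : ℤ)

/-- `s` lies weakly below `t` (for paths of the same semilength). -/
def WeaklyBelow (s t : List Bool) : Prop := ∀ i, pathHeight s i ≤ pathHeight t i

/-- The shape of a matching of `[2n]`: an east step for each opener, a south step for
each closer. -/
def shapeOf (n : ℕ) (M : Finset (ℕ × ℕ)) : List Bool :=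
  (List.range (2 * n)).map fun x => decide ((x + 1) ∈ M.image Prod.fst)

/-- Number of returns of a path: south steps ending on the diagonal. -/
def returnsOf (t : List Bool) : ℕ :=
  ((Finset.range t.length).filter fun i =>
    t[i]? = some false ∧ (t.take (i+1)).count true = (t.take (i+1)).count false).card

/-- Height sequence of a path, as natural numbers. -/
def hseq (t : List Bool) (i : ℕ) : ℕ := (t.take i).count true - (t.take i).count false

/-- `η(F)`: the number of indices `0 ≤ i ≤ 2n` with `h_i = 2`. -/
def etaOf (n : ℕ) (t : List Bool) : ℕ :=
  ((Finset.range (2 * n + 1)).filter fun i => hseq t i = 2).card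

/-! ### Full rook placements on Ferrers boards -/

/-- The square in column `c`, row `r` (both 1-indexed from the bottom left) belongs to the
Ferrers board with border path `t ∈ F_n`. -/
def InBoard (n : ℕ) (t : List Bool) (c r : ℕ) : Prop :=
  1 ≤ c ∧ 1 ≤ r ∧ ∃ i, c ≤ (t.take i).count true ∧ (t.take i).count false + r ≤ n

/-- `R` is a full rook placement on the Ferrers board with border path `t ∈ F_n`:
one rook in each of the `n` rows and `n` columns. -/
def IsFullRookPlacement (n : ℕ) (t : List Bool) (R : Finset (ℕ × ℕ)) : Prop :=
  (∀ p ∈ R, InBoard n t p.1 p.2) ∧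
  (∀ c, 1 ≤ c → c ≤ n → ∃! p, p ∈ R ∧ p.1 = c) ∧
  (∀ r, 1 ≤ r → r ≤ n → ∃! p, p ∈ R ∧ p.2 = r)

/-- The rooks of `R` lying in the rectangle `Γ(V_i)` determined by the `i`-th border vertex. -/
def rectRooks (n : ℕ) (t : List Bool) (R : Finset (ℕ × ℕ)) (i : ℕ) : Finset (ℕ × ℕ) :=
  R.filter fun p => p.1 ≤ (t.take i).count true ∧ p.2 + (t.take i).count false ≤ n

/-- Length of the longest increasing sequence (in both coordinates) in a finite point set. -/
def lisLen (S : Finset (ℕ × ℕ)) : ℕ :=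
  (S.powerset.filter fun T => ∀ p ∈ T, ∀ q ∈ T, p.1 < q.1 → p.2 < q.2).sup Finset.card

/-- The full rook placement `R` on the board with border `t ∈ F_n` contains the pattern `τ`:
some rectangle `Γ(V_i)` contains an occurrence of `τ`. -/
def PlacementContains {k : ℕ} (τ : Equiv.Perm (Fin k)) (n : ℕ) (t : List Bool)
    (R : Finset (ℕ × ℕ)) : Prop :=
  ∃ i ≤ 2 * n, ∃ f : Fin k → ℕ × ℕ,
    (∀ a, f a ∈ R ∧ (f a).1 ≤ (t.take i).count true ∧ (f a).2 + (t.take i).count false ≤ n) ∧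
    (∀ a b : Fin k, a < b → (f a).1 < (f b).1) ∧
    (∀ a b : Fin k, τ a < τ b → (f a).2 < (f b).2)

def PlacementAvoids {k : ℕ} (τ : Equiv.Perm (Fin k)) (n : ℕ) (t : List Bool)
    (R : Finset (ℕ × ℕ)) : Prop :=
  ¬ PlacementContains τ n t R

/-- `R` is board-minimal on the board with border `t`: every peak corner square holds a rook. -/
def BoardMinimal (n : ℕ) (t : List Bool) (R : Finset (ℕ × ℕ)) : Prop :=
  ∀ i, t[i]? = some true → t[i+1]? = some false →
    ((t.take (i+1)).count true, n - (t.take (i+1)).count false) ∈ R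

/-- Board-minimal full rook placements on boards of `F_n` avoiding the pattern `σ`,
recorded as pairs (border path, rook set). -/
def MinPlacements (n : ℕ) {k : ℕ} (σ : Equiv.Perm (Fin k)) :
    Set (List Bool × Finset (ℕ × ℕ)) :=
  {tR | IsDyckPath n tR.1 ∧ IsFullRookPlacement n tR.1 tR.2 ∧ BoardMinimal n tR.1 tR.2 ∧
        PlacementAvoids σ n tR.1 tR.2}

/-! ### Pattern avoidance in permutations -/

def PermContains {n k : ℕ} (τ : Equiv.Perm (Fin k)) (π : Equiv.Perm (Fin n)) : Prop :=
  ∃ f : Fin k → Fin n, StrictMono f ∧ ∀ a b : Fin k, τ a < τ b → π (f a) < π (f b)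

def PermAvoids {n k : ℕ} (τ : Equiv.Perm (Fin k)) (π : Equiv.Perm (Fin n)) : Prop :=
  ¬ PermContains τ π

/-- The full rook placement associated to a permutation of `[n]`. -/
def permPlacement {n : ℕ} (π : Equiv.Perm (Fin n)) : Finset (ℕ × ℕ) :=
  Finset.univ.image fun i : Fin n => ((i : ℕ) + 1, (π i : ℕ) + 1)

/-! ### Matchings with fixed points -/

/-- A (not necessarily perfect) matching on `{1, …, m}`: pairwise disjoint pairs. -/
def IsPartialMatching (m : ℕ) (M : Finset (ℕ × ℕ)) : Prop :=
  (∀ p ∈ M, p.1 < p.2 ∧ 1 ≤ p.1 ∧ p.2 ≤ m) ∧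
  ∀ p ∈ M, ∀ q ∈ M, p ≠ q → p.1 ≠ q.1 ∧ p.1 ≠ q.2 ∧ p.2 ≠ q.1 ∧ p.2 ≠ q.2

/-- The fixed points (unmatched vertices) of a matching on `{1, …, m}`. -/
def fixedPts (m : ℕ) (M : Finset (ℕ × ℕ)) : Finset ℕ :=
  (Finset.Icc 1 m).filter fun x => ∀ p ∈ M, p.1 ≠ x ∧ p.2 ≠ x

/-- The matched vertices of a matching on `{1, …, m}`. -/
def matchedSet (m : ℕ) (M : Finset (ℕ × ℕ)) : Finset ℕ :=
  (Finset.Icc 1 m).filter fun x => ∃ p ∈ M, p.1 = x ∨ p.2 = x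

/-- The rank (1-based) of `x` inside the finset `S`. -/
def rankIn (S : Finset ℕ) (x : ℕ) : ℕ := (S.filter (· ≤ x)).card

/-- The matching obtained by removing the fixed points and relabeling increasingly. -/
def relabeled (m : ℕ) (M : Finset (ℕ × ℕ)) : Finset (ℕ × ℕ) :=
  M.image fun p => (rankIn (matchedSet m M) p.1, rankIn (matchedSet m M) p.2)

/-! ### Set partitions -/

/-- `(i,j)` is an arc of the set partition `P` of `{1, …, n}`: `i < j` lie in a common block
with no element of that block strictly between them. -/
def PartArc {n : ℕ} (P : Finpartition (Finset.Icc 1 n)) (i j : ℕ) : Prop :=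
  i < j ∧ ∃ B ∈ P.parts, i ∈ B ∧ j ∈ B ∧ ∀ x ∈ B, ¬(i < x ∧ x < j)

/-- The set partition `P` contains the pattern `τ ∈ S_k`. -/
def PartContains {k n : ℕ} (τ : Equiv.Perm (Fin k)) (P : Finpartition (Finset.Icc 1 n)) : Prop :=
  ∃ f : Fin (2 * k) → ℕ, StrictMono f ∧
    ∀ a : Fin k,
      PartArc P (f ⟨a.1, by have := a.isLt; omega⟩)
        (f ⟨2 * k - 1 - (τ a).1, by have := (τ a).isLt; omega⟩)

def PartAvoids {k n : ℕ} (τ : Equiv.Perm (Fin k)) (P : Finpartition (Finset.Icc 1 n)) : Prop :=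
  ¬ PartContains τ P

/-! ### Counting functions -/

/-- `|M_n(τ)|`: the number of `τ`-avoiding perfect matchings of `[2n]`. -/
noncomputable def mcount {k : ℕ} (τ : Equiv.Perm (Fin k)) (n : ℕ) : ℕ :=
  {M : Finset (ℕ × ℕ) | IsPerfectMatching n M ∧ MatchAvoids τ M}.ncard

/-- `|M_n(σ,τ)|`: the number of perfect matchings of `[2n]` avoiding both `σ` and `τ`. -/
noncomputable def mcount2 {k : ℕ} (σ τ : Equiv.Perm (Fin k)) (n : ℕ) : ℕ :=
  {M : Finset (ℕ × ℕ) | IsPerfectMatching n M ∧ MatchAvoids σ M ∧ MatchAvoids τ M}.ncard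

/-- `|P_n(τ)|`: the number of `τ`-avoiding set partitions of `[n]`. -/
noncomputable def pcount {k : ℕ} (τ : Equiv.Perm (Fin k)) (n : ℕ) : ℕ :=
  Nat.card {P : Finpartition (Finset.Icc 1 n) // PartAvoids τ P}

/-- `|P_n(σ,τ)|`: the number of set partitions of `[n]` avoiding both `σ` and `τ`. -/
noncomputable def pcount2 {k : ℕ} (σ τ : Equiv.Perm (Fin k)) (n : ℕ) : ℕ :=
  Nat.card {P : Finpartition (Finset.Icc 1 n) // PartAvoids σ P ∧ PartAvoids τ P}

/-- `|S_n(τ)|`: the number of `τ`-avoiding permutations of `[n]`. -/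
noncomputable def scount {k : ℕ} (τ : Equiv.Perm (Fin k)) (n : ℕ) : ℕ :=
  Nat.card {π : Equiv.Perm (Fin n) // PermAvoids τ π}

/-!
Read a matching from left to right and keep the openers that are not yet closed in a queue, listed
by increasing closers: an east step inserts a new largest element anywhere in the queue, a south
step removes its first element. Three mutually crossing (nested) pairs give an increasing
(decreasing) subsequence of length three in some queue, and conversely, so by Erdős–Szekeres an
admissible queue has length at most four and no board of height at least five has an admissible
matching.

An admissible queue of length three is a peak or a valley. A new largest element fits nowhere into
a peak and at two places into a valley, while a queue of length two extends to one peak and one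
valley. Hence the completions of a peak and those of a valley are best counted together, and then
every vertex of height two contributes a factor two and every other vertex of height at most four
a factor one. Summing these products over all paths, two steps at a time, yields the eigenvalues
one and five.
-/

/-! ### Monotone triples -/

/-- `b` lies strictly between `a` and `c`: the triples that an admissible queue must not contain
as a subsequence. -/
def IsMonotoneTriple (a b c : ℕ) : Prop := a < b ∧ b < c ∨ c < b ∧ b < a

/-- `M` contains neither three mutually crossing nor three mutually nested pairs. Listing the three
pairs by increasing closers treats both patterns at once: the openers, which all precede the first
closer, must not be monotone. -/
def AvoidsMonotoneTriples (M : Finset (ℕ × ℕ)) : Prop :=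
  ∀ ⦃a a' b b' c c' : ℕ⦄, (a, a') ∈ M → (b, b') ∈ M → (c, c') ∈ M →
    a' < b' → b' < c' → a < a' → c < a' → ¬ IsMonotoneTriple a b c

theorem matchContains_p123_iff {M : Finset (ℕ × ℕ)} :
    MatchContains p123 M ↔ ∃ a b c c' b' a', (a, a') ∈ M ∧ (b, b') ∈ M ∧ (c, c') ∈ M ∧
      a < b ∧ b < c ∧ c < c' ∧ c' < b' ∧ b' < a' := by
  constructor
  · rintro ⟨f, hf, hM⟩
    exact ⟨_, _, _, _, _, _, hM 0, hM 1, hM 2, hf (by decide), hf (by decide), hf (by decide),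
      hf (by decide), hf (by decide)⟩
  · rintro ⟨a, b, c, c', b', a', ha, hb, hc, hab, hbc, hcc, hcb, hba⟩
    refine ⟨![a, b, c, c', b', a'], Fin.strictMono_iff_lt_succ.2 fun i => ?_, fun i => ?_⟩
    · fin_cases i <;> simpa
    · fin_cases i <;> simpa [p123]

theorem matchContains_p321_iff {M : Finset (ℕ × ℕ)} :
    MatchContains p321 M ↔ ∃ a b c a' b' c', (a, a') ∈ M ∧ (b, b') ∈ M ∧ (c, c') ∈ M ∧
      a < b ∧ b < c ∧ c < a' ∧ a' < b' ∧ b' < c' := by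
  constructor
  · rintro ⟨f, hf, hM⟩
    exact ⟨_, _, _, _, _, _, hM 0, hM 1, hM 2, hf (by decide), hf (by decide), hf (by decide),
      hf (by decide), hf (by decide)⟩
  · rintro ⟨a, b, c, a', b', c', ha, hb, hc, hab, hbc, hca, hab', hbc'⟩
    refine ⟨![a, b, c, a', b', c'], Fin.strictMono_iff_lt_succ.2 fun i => ?_, fun i => ?_⟩
    · fin_cases i <;> simpa
    · fin_cases i <;> simpa [p321]

theorem avoidsMonotoneTriples_iff {M : Finset (ℕ × ℕ)} :
    AvoidsMonotoneTriples M ↔ MatchAvoids p123 M ∧ MatchAvoids p321 M := by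
  rw [MatchAvoids, MatchAvoids, matchContains_p123_iff, matchContains_p321_iff]
  constructor
  · refine fun h => ⟨?_, ?_⟩
    · rintro ⟨a, b, c, c', b', a', ha, hb, hc, hab, hbc, hcc, hcb, hba⟩
      exact h hc hb ha hcb hba hcc (by omega) (Or.inr ⟨hab, hbc⟩)
    · rintro ⟨a, b, c, a', b', c', ha, hb, hc, hab, hbc, hca, hab', hbc'⟩
      exact h ha hb hc hab' hbc' (by omega) hca (Or.inl ⟨hab, hbc⟩)
  · rintro ⟨hnest, hcross⟩ a a' b b' c c' ha hb hc hab hbc haa hca (⟨h₁, h₂⟩ | ⟨h₁, h₂⟩)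
    · exact hcross ⟨a, b, c, a', b', c', ha, hb, hc, h₁, h₂, hca, hab, hbc⟩
    · exact hnest ⟨c, b, a, a', b', c', hc, hb, ha, h₁, h₂, haa, hab, hbc⟩

theorem AvoidsMonotoneTriples.mono {M N : Finset (ℕ × ℕ)} (hN : AvoidsMonotoneTriples N)
    (hMN : M ⊆ N) : AvoidsMonotoneTriples M :=
  fun _ _ _ _ _ _ ha hb hc => hN (hMN ha) (hMN hb) (hMN hc)

/-! ### The order of the closers -/

/-- The pair of `M` opened by `a` is closed before the pair opened by `b`. -/
def ClosesBefore (M : Finset (ℕ × ℕ)) (a b : ℕ) : Prop :=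
  ∃ a' b', (a, a') ∈ M ∧ (b, b') ∈ M ∧ a' < b'

namespace ClosesBefore

variable {M N : Finset (ℕ × ℕ)} {a b c : ℕ}

theorem mono (h : ClosesBefore M a b) (hMN : M ⊆ N) : ClosesBefore N a b :=
  let ⟨a', b', ha, hb, hlt⟩ := h
  ⟨a', b', hMN ha, hMN hb, hlt⟩

theorem lt (h : ClosesBefore M a b) (hM : Set.InjOn Prod.fst (M : Set (ℕ × ℕ))) {a' b' : ℕ}
    (ha : (a, a') ∈ M) (hb : (b, b') ∈ M) : a' < b' := by
  obtain ⟨a'', b'', ha', hb', hlt⟩ := h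
  obtain ⟨-, rfl⟩ := Prod.mk.inj (hM ha ha' rfl)
  obtain ⟨-, rfl⟩ := Prod.mk.inj (hM hb hb' rfl)
  exact hlt

theorem asymm (h : ClosesBefore M a b) (hM : Set.InjOn Prod.fst (M : Set (ℕ × ℕ))) :
    ¬ ClosesBefore M b a := by
  rintro ⟨b', a', hb, ha, hlt⟩
  exact (h.lt hM ha hb).not_gt hlt

theorem trans (hab : ClosesBefore M a b) (hbc : ClosesBefore M b c)
    (hM : Set.InjOn Prod.fst (M : Set (ℕ × ℕ))) : ClosesBefore M a c := by
  obtain ⟨b', c', hb, hc, hbc⟩ := hbc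
  obtain ⟨a', b'', ha, hb', hab⟩ := hab
  obtain ⟨-, rfl⟩ := Prod.mk.inj (hM hb hb' rfl)
  exact ⟨a', c', ha, hc, hab.trans hbc⟩

theorem total (hM : Set.InjOn Prod.snd (M : Set (ℕ × ℕ))) {a' b' : ℕ} (ha : (a, a') ∈ M)
    (hb : (b, b') ∈ M) (hab : a ≠ b) : ClosesBefore M a b ∨ ClosesBefore M b a := by
  rcases lt_trichotomy a' b' with h | rfl | h
  · exact Or.inl ⟨a', b', ha, hb, h⟩
  · exact absurd (congrArg Prod.fst (hM ha hb rfl)) hab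
  · exact Or.inr ⟨b', a', hb, ha, h⟩

end ClosesBefore

theorem exists_insertIdx_pairwise {α : Type*} {R : α → α → Prop} {x : α} {L : List α}
    (hL : L.Pairwise R) (htotal : ∀ a ∈ L, R a x ∨ R x a)
    (htrans : ∀ a ∈ L, ∀ b ∈ L, R x a → R a b → R x b) :
    ∃ i ≤ L.length, (L.insertIdx i x).Pairwise R := by
  induction L with
  | nil => exact ⟨0, le_rfl, by simp⟩
  | cons a L ih =>
    obtain ⟨haL, hL'⟩ := List.pairwise_cons.1 hL
    rcases htotal a List.mem_cons_self with hax | hxa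
    · obtain ⟨i, hi, hpw⟩ := ih hL' (fun b hb => htotal b (List.mem_cons_of_mem a hb))
        fun b hb c hc => htrans b (List.mem_cons_of_mem a hb) c (List.mem_cons_of_mem a hc)
      refine ⟨i + 1, Nat.succ_le_succ hi, List.pairwise_cons.2 ⟨fun b hb => ?_, hpw⟩⟩
      rcases (List.mem_insertIdx hi).1 hb with rfl | hb
      exacts [hax, haL b hb]
    · refine ⟨0, Nat.zero_le _, List.pairwise_cons.2 ⟨fun b hb => ?_, hL⟩⟩
      rcases List.mem_cons.1 hb with rfl | hb'
      exacts [hxa, htrans a List.mem_cons_self b hb hxa (haL b hb')]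

theorem pairwise_insertIdx_unique {α : Type*} {R : α → α → Prop} {x : α} {L : List α} {i j : ℕ}
    (hR : ∀ a b, R a b → ¬ R b a) (hx : x ∉ L) (hi : i ≤ L.length) (hj : j ≤ L.length)
    (hpi : (L.insertIdx i x).Pairwise R) (hpj : (L.insertIdx j x).Pairwise R) : i = j :=
  List.injOn_insertIdx_index_of_notMem L x hx hi hj <|
    ((List.perm_insertIdx x L hi).trans (List.perm_insertIdx x L hj).symm).eq_of_pairwise
      (fun a b _ _ hab hba => absurd hba (hR a b hab)) hpi hpj

theorem image_erase_of_injOn {α β : Type*} [DecidableEq α] [DecidableEq β] {f : α → β}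
    {s : Finset α} (hf : Set.InjOn f (s : Set α)) {a : α} (ha : a ∈ s) :
    (s.erase a).image f = (s.image f).erase (f a) := by
  rw [← Finset.sdiff_singleton_eq_erase, ← Finset.sdiff_singleton_eq_erase,
    Finset.image_sdiff_of_injOn hf (Finset.singleton_subset_iff.2 ha), Finset.image_singleton]

/-! ### Completions of a queue -/

/-- The positions of the letter `b` in the word `t` when its first letter is at position `x`. -/
def stepPositions (b : Bool) : ℕ → List Bool → Finset ℕ
  | _, [] => ∅
  | x, s :: t => if s = b then insert x (stepPositions b (x + 1) t) else stepPositions b (x + 1) t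

theorem mem_stepPositions {b : Bool} {x y : ℕ} {t : List Bool} :
    y ∈ stepPositions b x t ↔ x ≤ y ∧ t[y - x]? = some b := by
  induction t generalizing x with
  | nil => simp [stepPositions]
  | cons s t ih =>
    have hmem : y ∈ stepPositions b x (s :: t) ↔ y = x ∧ s = b ∨ y ∈ stepPositions b (x + 1) t := by
      by_cases hs : s = b <;> simp [stepPositions, hs]
    rw [hmem, ih]
    rcases lt_trichotomy y x with h | rfl | h
    · simp [h.ne, h.not_ge, (h.trans x.lt_succ_self).not_ge]
    · simp
    · have hsub : y - x = y - (x + 1) + 1 := by omega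
      simp [hsub, h.ne', h.le, Nat.succ_le_of_lt h]

theorem le_of_mem_stepPositions {b : Bool} {x y : ℕ} {t : List Bool}
    (hy : y ∈ stepPositions b x t) : x ≤ y :=
  (mem_stepPositions.1 hy).1

theorem toFinset_insertIdx_union_stepPositions {x i : ℕ} {t : List Bool} {L : List ℕ}
    (hi : i ≤ L.length) :
    (L.insertIdx i x).toFinset ∪ stepPositions true (x + 1) t =
      L.toFinset ∪ stepPositions true x (true :: t) := by
  ext y
  simp only [stepPositions, Finset.mem_union, List.mem_toFinset, List.mem_insertIdx hi, if_true,
    Finset.mem_insert]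
  tauto

/-- The partial matchings `M` that remain to be drawn when a path has been read up to position `x`,
the suffix `t` is still to be read, and `L` is the queue of the openers that are not yet closed,
listed by increasing closers. -/
structure IsCompletion (x : ℕ) (t : List Bool) (L : List ℕ) (M : Finset (ℕ × ℕ)) : Prop where
  fst_lt_snd : ∀ p ∈ M, p.1 < p.2
  injOn_fst : Set.InjOn Prod.fst (M : Set (ℕ × ℕ))
  injOn_snd : Set.InjOn Prod.snd (M : Set (ℕ × ℕ))
  image_fst : M.image Prod.fst = L.toFinset ∪ stepPositions true x t
  image_snd : M.image Prod.snd = stepPositions false x t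
  pairwise_closesBefore : L.Pairwise (ClosesBefore M)

namespace IsCompletion

variable {x : ℕ} {t : List Bool} {a : ℕ} {L : List ℕ} {M : Finset (ℕ × ℕ)}

theorem exists_mem_iff (h : IsCompletion x t L M) {b : ℕ} :
    (∃ c, (b, c) ∈ M) ↔ b ∈ L ∨ b ∈ stepPositions true x t := by
  rw [← List.mem_toFinset, ← Finset.mem_union, ← h.image_fst]
  simp

theorem snd_mem (h : IsCompletion x t L M) {b c : ℕ} (hbc : (b, c) ∈ M) :
    c ∈ stepPositions false x t :=
  h.image_snd ▸ Finset.mem_image_of_mem Prod.snd hbc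

theorem le_snd (h : IsCompletion x t L M) {b c : ℕ} (hbc : (b, c) ∈ M) : x ≤ c :=
  le_of_mem_stepPositions (h.snd_mem hbc)

theorem mem_of_lt (h : IsCompletion x t L M) {b c : ℕ} (hbc : (b, c) ∈ M) (hb : b < x) : b ∈ L :=
  (h.exists_mem_iff.1 ⟨c, hbc⟩).resolve_right fun hb' => (le_of_mem_stepPositions hb').not_gt hb

theorem of_insertIdx {i : ℕ} (hi : i ≤ L.length)
    (h : IsCompletion (x + 1) t (L.insertIdx i x) M) : IsCompletion x (true :: t) L M where
  fst_lt_snd := h.fst_lt_snd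
  injOn_fst := h.injOn_fst
  injOn_snd := h.injOn_snd
  image_fst := h.image_fst.trans (toFinset_insertIdx_union_stepPositions hi)
  image_snd := h.image_snd
  pairwise_closesBefore := h.pairwise_closesBefore.sublist (List.sublist_insertIdx L i x)

theorem exists_insertIdx (h : IsCompletion x (true :: t) L M) (hx : x ∉ L) :
    ∃ i ≤ L.length, IsCompletion (x + 1) t (L.insertIdx i x) M := by
  obtain ⟨x', hx'⟩ : ∃ x', (x, x') ∈ M := h.exists_mem_iff.2 (by simp [stepPositions])
  obtain ⟨i, hi, hpw⟩ := exists_insertIdx_pairwise (x := x) h.pairwise_closesBefore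
    (fun b hb => by
      obtain ⟨b', hb'⟩ := h.exists_mem_iff.2 (Or.inl hb)
      exact ClosesBefore.total h.injOn_snd hb' hx' (ne_of_mem_of_not_mem hb hx))
    (fun _ _ _ _ hxb hbc => hxb.trans hbc h.injOn_fst)
  exact ⟨i, hi, h.fst_lt_snd, h.injOn_fst, h.injOn_snd,
    h.image_fst.trans (toFinset_insertIdx_union_stepPositions hi).symm, h.image_snd, hpw⟩

theorem mk_head_mem (h : IsCompletion x (false :: t) (a :: L) M) (hL : ∀ b ∈ a :: L, b < x) :
    (a, x) ∈ M := by
  obtain ⟨⟨b, c⟩, hb, rfl⟩ : ∃ p ∈ M, p.2 = x := by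
    rw [← Finset.mem_image, h.image_snd]
    simp [stepPositions]
  rcases List.mem_cons.1 (h.mem_of_lt hb (h.fst_lt_snd _ hb)) with rfl | hbL
  · exact hb
  · obtain ⟨a', ha'⟩ := h.exists_mem_iff.2 (Or.inl List.mem_cons_self)
    have hlt : a' < c :=
      ((List.pairwise_cons.1 h.pairwise_closesBefore).1 b hbL).lt h.injOn_fst ha' hb
    exact absurd (h.le_snd ha') hlt.not_ge

theorem erase_mk (h : IsCompletion x (false :: t) (a :: L) M) (hL : ∀ b ∈ a :: L, b < x)
    (ha : a ∉ L) : IsCompletion (x + 1) t L (M.erase (a, x)) where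
  fst_lt_snd p hp := h.fst_lt_snd p (Finset.mem_of_mem_erase hp)
  injOn_fst := h.injOn_fst.mono (Finset.erase_subset _ _)
  injOn_snd := h.injOn_snd.mono (Finset.erase_subset _ _)
  image_fst := by
    have hmem : a ∉ L.toFinset ∪ stepPositions true (x + 1) t := by
      simp only [Finset.mem_union, List.mem_toFinset, ha, false_or]
      exact fun h' => (le_of_mem_stepPositions h').not_gt
        ((hL a List.mem_cons_self).trans x.lt_succ_self)
    rw [image_erase_of_injOn h.injOn_fst (h.mk_head_mem hL), h.image_fst, List.toFinset_cons,
      Finset.insert_union]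
    exact Finset.erase_insert hmem
  image_snd := by
    have hmem : x ∉ stepPositions false (x + 1) t :=
      fun h' => (le_of_mem_stepPositions h').not_gt x.lt_succ_self
    rw [image_erase_of_injOn h.injOn_snd (h.mk_head_mem hL), h.image_snd]
    exact Finset.erase_insert hmem
  pairwise_closesBefore := by
    refine (List.pairwise_cons.1 h.pairwise_closesBefore).2.imp_of_mem ?_
    rintro b c hb hc ⟨b', c', hb', hc', hlt⟩
    have hne : ∀ {d d'}, d ∈ L → (d, d') ≠ (a, x) := fun hd heq =>
      ha ((Prod.mk.inj heq).1 ▸ hd)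
    exact ⟨b', c', Finset.mem_erase.2 ⟨hne hb, hb'⟩, Finset.mem_erase.2 ⟨hne hc, hc'⟩, hlt⟩

theorem mk_notMem (h : IsCompletion (x + 1) t L M) : (a, x) ∉ M :=
  fun hx => (h.le_snd hx).not_gt x.lt_succ_self

theorem insert_mk (h : IsCompletion (x + 1) t L M) (hax : a < x) (ha : a ∉ L) :
    IsCompletion x (false :: t) (a :: L) (insert (a, x) M) where
  fst_lt_snd := by simpa [hax] using fun b c => h.fst_lt_snd (b, c)
  injOn_fst := by
    rw [Finset.coe_insert, Set.injOn_insert (Finset.mem_coe.not.2 h.mk_notMem)]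
    refine ⟨h.injOn_fst, ?_⟩
    rintro ⟨⟨b, c⟩, hbc, rfl⟩
    exact ha (h.mem_of_lt hbc (hax.trans x.lt_succ_self))
  injOn_snd := by
    rw [Finset.coe_insert, Set.injOn_insert (Finset.mem_coe.not.2 h.mk_notMem)]
    refine ⟨h.injOn_snd, ?_⟩
    rintro ⟨⟨b, c⟩, hbc, rfl⟩
    exact h.mk_notMem hbc
  image_fst := by
    rw [Finset.image_insert, h.image_fst, List.toFinset_cons, Finset.insert_union]
    rfl
  image_snd := by
    rw [Finset.image_insert, h.image_snd]
    rfl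
  pairwise_closesBefore := by
    refine List.pairwise_cons.2 ⟨fun b hb => ?_, h.pairwise_closesBefore.imp fun hbc =>
      hbc.mono (Finset.subset_insert _ _)⟩
    obtain ⟨b', hb'⟩ := h.exists_mem_iff.2 (Or.inl hb)
    exact ⟨x, b', Finset.mem_insert_self _ _, Finset.mem_insert_of_mem hb', h.le_snd hb'⟩

theorem triplewise_not_isMonotoneTriple (h : IsCompletion x t L M) (hM : AvoidsMonotoneTriples M)
    (hL : ∀ b ∈ L, b < x) : L.Triplewise fun a b c => ¬ IsMonotoneTriple a b c := by
  rw [List.triplewise_iff_getElem]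
  intro i j k hij hjk hk
  have hpw := List.pairwise_iff_getElem.1 h.pairwise_closesBefore
  obtain ⟨a', b', ha, hb, hab⟩ := hpw i j (by omega) (by omega) hij
  obtain ⟨c', hc⟩ := h.exists_mem_iff.2 (Or.inl (L.getElem_mem hk))
  exact hM ha hb hc hab ((hpw j k (by omega) hk hjk).lt h.injOn_fst hb hc)
    ((hL _ (L.getElem_mem _)).trans_le (h.le_snd ha))
    ((hL _ (L.getElem_mem _)).trans_le (h.le_snd ha))

/-- In a forbidden triple of `insert (a, x) M` the pair closing first must be `(a, x)`, so both
other openers are in the queue `L`. -/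
theorem avoidsMonotoneTriples_insert (h : IsCompletion (x + 1) t L M)
    (hM : AvoidsMonotoneTriples M) (hL : L.Pairwise fun b c => ¬ IsMonotoneTriple a b c) :
    AvoidsMonotoneTriples (insert (a, x) M) := by
  have hmem : ∀ {b b'}, (b, b') ∈ insert (a, x) M → x < b' → (b, b') ∈ M := by
    intro b b' hb hlt
    exact Finset.mem_of_mem_insert_of_ne hb fun heq => hlt.ne' (Prod.mk.inj heq).2
  intro a₀ a' b b' c c' ha hb hc hab hbc haa hca
  rcases Finset.mem_insert.1 ha with heq | ha
  · obtain ⟨rfl, rfl⟩ := Prod.mk.inj heq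
    have hb := hmem hb hab
    have hc := hmem hc (hab.trans hbc)
    have hpw : L.Pairwise fun b c => ClosesBefore M b c → ¬ IsMonotoneTriple a₀ b c :=
      hL.imp fun {b c} hbc (_ : ClosesBefore M b c) => hbc
    have hflip : L.Pairwise fun b c => ClosesBefore M c b → ¬ IsMonotoneTriple a₀ c b :=
      h.pairwise_closesBefore.imp fun hbc hcb => absurd hcb (hbc.asymm h.injOn_fst)
    intro hmono
    have hb_lt : b < a' := by
      rcases hmono with ⟨-, hbc'⟩ | ⟨-, hba⟩
      exacts [hbc'.trans hca, hba.trans haa]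
    exact hpw.forall_of_forall_of_flip (fun d _ hd _ => hd.asymm h.injOn_fst hd) hflip
      (h.mem_of_lt hb (hb_lt.trans a'.lt_succ_self)) (h.mem_of_lt hc (hca.trans a'.lt_succ_self))
      ⟨b', c', hb, hc, hbc⟩ hmono
  · have hx : x < a' := h.le_snd ha
    exact hM ha (hmem hb (hx.trans hab)) (hmem hc (hx.trans (hab.trans hbc))) hab hbc haa hca

end IsCompletion

/-! ### Counting the completions -/

open Classical in
/-- The completions of the queue `L` that avoid both patterns, as a finite set. -/
noncomputable def completions (x : ℕ) (t : List Bool) (L : List ℕ) : Finset (Finset (ℕ × ℕ)) :=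
  ((L.toFinset ∪ stepPositions true x t) ×ˢ stepPositions false x t).powerset.filter
    fun M => IsCompletion x t L M ∧ AvoidsMonotoneTriples M

section Completions

variable {x : ℕ} {t : List Bool} {a : ℕ} {L : List ℕ} {M : Finset (ℕ × ℕ)}

theorem mem_completions :
    M ∈ completions x t L ↔ IsCompletion x t L M ∧ AvoidsMonotoneTriples M := by
  simp only [completions, Finset.mem_filter, Finset.mem_powerset]
  refine and_iff_right_of_imp fun ⟨h, _⟩ => ?_
  rw [← h.image_fst, ← h.image_snd]
  exact Finset.subset_product

theorem completions_nil_nil : completions x [] [] = {∅} := by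
  ext M
  rw [mem_completions, Finset.mem_singleton]
  refine ⟨fun h => Finset.image_eq_empty.1 h.1.image_snd, ?_⟩
  rintro rfl
  exact ⟨⟨by simp, by simp, by simp, by simp [stepPositions], by simp [stepPositions],
    List.Pairwise.nil⟩, fun _ _ _ _ _ _ h => absurd h (Finset.notMem_empty _)⟩

theorem completions_nil_cons : completions x [] (a :: L) = ∅ := by
  refine Finset.eq_empty_of_forall_notMem fun M hM => ?_
  obtain ⟨b, hb⟩ := (mem_completions.1 hM).1.exists_mem_iff.2 (Or.inl List.mem_cons_self)
  exact Finset.notMem_empty b ((mem_completions.1 hM).1.snd_mem hb)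

theorem completions_false_nil : completions x (false :: t) [] = ∅ := by
  refine Finset.eq_empty_of_forall_notMem fun M hM => ?_
  have h := (mem_completions.1 hM).1
  obtain ⟨⟨b, c⟩, hb, rfl⟩ : ∃ p ∈ M, p.2 = x := by
    rw [← Finset.mem_image, h.image_snd]
    simp [stepPositions]
  exact List.not_mem_nil (h.mem_of_lt hb (h.fst_lt_snd _ hb))

theorem completions_eq_empty (hL : ∀ b ∈ L, b < x)
    (hmono : ¬ L.Triplewise fun a b c => ¬ IsMonotoneTriple a b c) : completions x t L = ∅ := by
  refine Finset.eq_empty_of_forall_notMem fun M hM => hmono ?_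
  obtain ⟨h, hav⟩ := mem_completions.1 hM
  exact h.triplewise_not_isMonotoneTriple hav hL

theorem completions_false_cons (hL : ∀ b ∈ a :: L, b < x) (ha : a ∉ L)
    (hmono : L.Pairwise fun b c => ¬ IsMonotoneTriple a b c) :
    completions x (false :: t) (a :: L) = (completions (x + 1) t L).image (insert (a, x)) := by
  ext M
  simp only [Finset.mem_image, mem_completions]
  constructor
  · rintro ⟨h, hav⟩
    exact ⟨M.erase (a, x), ⟨h.erase_mk hL ha, hav.mono (Finset.erase_subset _ _)⟩,
      Finset.insert_erase (h.mk_head_mem hL)⟩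
  · rintro ⟨M, ⟨h, hav⟩, rfl⟩
    exact ⟨h.insert_mk (hL a List.mem_cons_self) ha, h.avoidsMonotoneTriples_insert hav hmono⟩

theorem card_completions_false_cons (hL : ∀ b ∈ a :: L, b < x) (ha : a ∉ L)
    (hmono : L.Pairwise fun b c => ¬ IsMonotoneTriple a b c) :
    (completions x (false :: t) (a :: L)).card = (completions (x + 1) t L).card := by
  rw [completions_false_cons hL ha hmono]
  refine Finset.card_image_of_injOn fun M hM N hN hMN => ?_
  rw [← Finset.erase_insert (mem_completions.1 hM).1.mk_notMem, hMN,
    Finset.erase_insert (mem_completions.1 hN).1.mk_notMem]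

theorem completions_true (hx : x ∉ L) :
    completions x (true :: t) L = (Finset.range (L.length + 1)).biUnion fun i =>
      completions (x + 1) t (L.insertIdx i x) := by
  ext M
  simp only [Finset.mem_biUnion, Finset.mem_range, Nat.lt_succ_iff, mem_completions]
  constructor
  · rintro ⟨h, hav⟩
    obtain ⟨i, hi, hi'⟩ := h.exists_insertIdx hx
    exact ⟨i, hi, hi', hav⟩
  · rintro ⟨i, hi, h, hav⟩
    exact ⟨h.of_insertIdx hi, hav⟩

theorem card_completions_true (hx : x ∉ L) :
    (completions x (true :: t) L).card =
      ∑ i ∈ Finset.range (L.length + 1), (completions (x + 1) t (L.insertIdx i x)).card := by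
  rw [completions_true hx]
  refine Finset.card_biUnion fun i hi j hj hij => Finset.disjoint_left.2 fun M hMi hMj => hij ?_
  have hi' := (mem_completions.1 hMi).1
  exact pairwise_insertIdx_unique (fun _ _ hab => hab.asymm hi'.injOn_fst) hx
    (Finset.mem_range_succ_iff.1 hi) (Finset.mem_range_succ_iff.1 hj)
    hi'.pairwise_closesBefore (mem_completions.1 hMj).1.pairwise_closesBefore

end Completions

/-! ### Queues without monotone triples -/

/-- The Erdős–Szekeres bound for monotone sequences of length three. -/
theorem length_le_four_of_triplewise {L : List ℕ} (hnd : L.Nodup)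
    (hL : L.Triplewise fun a b c => ¬ IsMonotoneTriple a b c) : L.length ≤ 4 := by
  rcases L with - | ⟨a, - | ⟨b, - | ⟨c, - | ⟨d, - | ⟨e, L⟩⟩⟩⟩⟩
  iterate 5 · simp
  simp only [List.triplewise_cons, List.pairwise_cons, List.nodup_cons, List.mem_cons,
    IsMonotoneTriple] at hnd hL
  grind

theorem card_completions_true_eq_zero {x : ℕ} {t : List Bool} {L : List ℕ}
    (hL : ∀ b ∈ L, b < x) (hnd : L.Nodup) (hlen : 4 ≤ L.length) :
    (completions x (true :: t) L).card = 0 := by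
  have hx : x ∉ L := fun hx => (hL x hx).false
  rw [card_completions_true hx]
  refine Finset.sum_eq_zero fun i hi => Finset.card_eq_zero.2 ?_
  have hi' : i ≤ L.length := Finset.mem_range_succ_iff.1 hi
  refine completions_eq_empty (fun b hb => ?_) fun htw => ?_
  · rcases (List.mem_insertIdx hi').1 hb with rfl | hb
    exacts [b.lt_succ_self, (hL b hb).trans x.lt_succ_self]
  · have hnd' : (L.insertIdx i x).Nodup :=
      (List.perm_insertIdx x L hi').nodup_iff.2 (List.nodup_cons.2 ⟨hx, hnd⟩)
    have hlen' := length_le_four_of_triplewise hnd' htw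
    rw [List.length_insertIdx_of_le_length hi'] at hlen'
    omega

/-! ### Weighted paths -/

/-- The factor that a vertex of height `h` contributes to the number of admissible matchings. -/
def vertexWeight (h : ℕ) : ℕ := if h = 2 then 2 else if h ≤ 4 then 1 else 0

/-- The product of the factors of the vertices of a path from height `h` down to height `0`, its
first vertex excepted; it is `0` for any other word. -/
def pathWeight : List Bool → ℕ → ℕ
  | [], h => if h = 0 then 1 else 0
  | true :: t, h => vertexWeight (h + 1) * pathWeight t (h + 1)
  | false :: _, 0 => 0
  | false :: t, h + 1 => vertexWeight h * pathWeight t h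

/-- The number of completions of an admissible queue of length `h` equals `pathWeight t h` for
`h ≤ 2`. For `h = 3` it depends on whether the queue is a peak or a valley, and for `h = 4` on
whether the queue becomes a peak or a valley when its first opener is closed; in both cases the two
numbers add up to `pathWeight t h`. -/
structure CountedByWeight (x : ℕ) (t : List Bool) : Prop where
  nil : (completions x t []).card = pathWeight t 0
  singleton : ∀ ⦃a⦄, a < x → (completions x t [a]).card = pathWeight t 1
  pair : ∀ ⦃a b⦄, a < x ∧ b < x ∧ a ≠ b → (completions x t [a, b]).card = pathWeight t 2
  peak_add_valley : ∀ ⦃a b c a' b' c'⦄, a < b ∧ c < b ∧ a ≠ c ∧ b < x →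
    b' < a' ∧ b' < c' ∧ a' ≠ c' ∧ a' < x ∧ c' < x →
    (completions x t [a, b, c]).card + (completions x t [a', b', c']).card = pathWeight t 3
  peak_add_valley_tail : ∀ ⦃a b c d a' b' c' d'⦄, b < a ∧ a < c ∧ b < d ∧ d < c ∧ a ≠ d ∧ c < x →
    c' < a' ∧ a' < b' ∧ c' < d' ∧ d' < b' ∧ a' ≠ d' ∧ b' < x →
    (completions x t [a, b, c, d]).card + (completions x t [a', b', c', d']).card = pathWeight t 4

namespace CountedByWeight

variable {x : ℕ} {t : List Bool}

theorem of_nil : CountedByWeight x [] where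
  nil := by simp [completions_nil_nil, pathWeight]
  singleton _ _ := by simp [completions_nil_cons, pathWeight]
  pair _ _ _ := by simp [completions_nil_cons, pathWeight]
  peak_add_valley := by simp [completions_nil_cons, pathWeight]
  peak_add_valley_tail := by simp [completions_nil_cons, pathWeight]

theorem cons_false (h : CountedByWeight (x + 1) t) : CountedByWeight x (false :: t) where
  nil := by simp [completions_false_nil, pathWeight]
  singleton a ha := by
    rw [card_completions_false_cons (by simpa) (by simp) (by simp), h.nil]
    simp [pathWeight, vertexWeight]
  pair a b hab := by
    rw [card_completions_false_cons (by grind) (by grind) (by simp), h.singleton (by omega)]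
    simp [pathWeight, vertexWeight]
  peak_add_valley a b c a' b' c' hpeak hvalley := by
    rw [card_completions_false_cons (by grind) (by grind) (by grind [IsMonotoneTriple]),
      card_completions_false_cons (by grind) (by grind) (by grind [IsMonotoneTriple]),
      h.pair (by omega), h.pair (by omega)]
    simp [pathWeight, vertexWeight, two_mul]
  peak_add_valley_tail a b c d a' b' c' d' hpeak hvalley := by
    rw [card_completions_false_cons (by grind) (by grind) (by grind [IsMonotoneTriple]),
      card_completions_false_cons (by grind) (by grind) (by grind [IsMonotoneTriple]),
      h.peak_add_valley (by omega) (by omega)]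
    simp [pathWeight, vertexWeight]

theorem cons_true (h : CountedByWeight (x + 1) t) : CountedByWeight x (true :: t) where
  nil := by
    rw [card_completions_true (by simp)]
    simp [h.singleton x.lt_succ_self, pathWeight, vertexWeight]
  singleton a ha := by
    rw [card_completions_true (by grind)]
    simp only [List.length_cons, List.length_nil, Finset.sum_range_succ, Finset.sum_range_zero,
      List.insertIdx_zero, List.insertIdx_succ_cons]
    rw [h.pair (by omega), h.pair (by omega)]
    simp [pathWeight, vertexWeight, two_mul]
  pair a b hab := by
    rw [card_completions_true (by grind)]
    simp only [List.length_cons, List.length_nil, Finset.sum_range_succ, Finset.sum_range_zero,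
      List.insertIdx_zero, List.insertIdx_succ_cons]
    rcases hab.2.2.lt_or_gt with hlt | hlt
    · have hsum := h.peak_add_valley (a := a) (b := x) (c := b) (a' := x) (b' := a) (c' := b)
        (by omega) (by omega)
      rw [completions_eq_empty (L := [a, b, x]) (by grind) (by grind [IsMonotoneTriple])]
      simp [pathWeight, vertexWeight, ← hsum, add_comm]
    · have hsum := h.peak_add_valley (a := a) (b := x) (c := b) (a' := a) (b' := b) (c' := x)
        (by omega) (by omega)
      rw [completions_eq_empty (L := [x, a, b]) (by grind) (by grind [IsMonotoneTriple])]
      simp [pathWeight, vertexWeight, ← hsum]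
  peak_add_valley a b c a' b' c' hpeak hvalley := by
    rw [card_completions_true (by grind), card_completions_true (by grind)]
    simp only [List.length_cons, List.length_nil, Finset.sum_range_succ, Finset.sum_range_zero,
      List.insertIdx_zero, List.insertIdx_succ_cons]
    have hsum := h.peak_add_valley_tail (a := a') (b := b') (c := x) (d := c') (a' := a') (b' := x)
      (c' := b') (d' := c') (by omega) (by omega)
    rw [completions_eq_empty (L := [x, a, b, c]), completions_eq_empty (L := [a, x, b, c]),
      completions_eq_empty (L := [a, b, x, c]), completions_eq_empty (L := [a, b, c, x]),
      completions_eq_empty (L := [x, a', b', c']), completions_eq_empty (L := [a', b', c', x])]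
    · simp [pathWeight, vertexWeight, ← hsum, add_comm]
    all_goals grind [IsMonotoneTriple]
  peak_add_valley_tail a b c d a' b' c' d' hpeak hvalley := by
    rw [card_completions_true_eq_zero (by grind) (by grind) le_rfl,
      card_completions_true_eq_zero (by grind) (by grind) le_rfl]
    simp [pathWeight, vertexWeight]

end CountedByWeight

theorem countedByWeight (x : ℕ) (t : List Bool) : CountedByWeight x t := by
  induction t generalizing x with
  | nil => exact .of_nil
  | cons s t ih =>
    cases s
    exacts [(ih (x + 1)).cons_false, (ih (x + 1)).cons_true]

theorem pathWeight_eq_prod {t : List Bool} {h : ℕ}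
    (hpos : ∀ i, (t.take i).count false ≤ h + (t.take i).count true)
    (hend : h + t.count true = t.count false) :
    pathWeight t h = ∏ i ∈ Finset.range t.length,
      vertexWeight (h + (t.take (i + 1)).count true - (t.take (i + 1)).count false) := by
  induction t generalizing h with
  | nil => simp_all [pathWeight]
  | cons s t ih =>
    have hpos' := fun i => hpos (i + 1)
    rw [List.length_cons, Finset.prod_range_succ', mul_comm]
    cases s <;> simp only [List.take_succ_cons, List.count_cons_self, List.count_cons_of_ne,
      ne_eq, reduceCtorEq, not_false_eq_true] at hpos' hend ⊢
    · obtain ⟨k, rfl⟩ : ∃ k, h = k + 1 := Nat.exists_eq_succ_of_ne_zero fun hh => by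
        simpa [hh] using hpos 1
      rw [pathWeight, ih (fun i => by have := hpos' i; omega) (by omega)]
      congr 1
      exact Finset.prod_congr rfl fun i _ => by congr 1; omega
    · rw [pathWeight, ih (fun i => by have := hpos' i; omega) (by omega)]
      congr 1
      exact Finset.prod_congr rfl fun i _ => by congr 1; omega

theorem pathWeight_zero_eq_prod_hseq {n : ℕ} {t : List Bool} (ht : IsDyckPath n t) :
    pathWeight t 0 = ∏ i ∈ Finset.range (2 * n + 1), vertexWeight (hseq t i) := by
  obtain ⟨hlen, htrue, hpos⟩ := ht
  have hend : t.count true = t.count false := by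
    have := t.count_true_add_count_false
    omega
  rw [pathWeight_eq_prod (by simpa using hpos) (by simpa using hend), hlen, Finset.prod_range_succ']
  simp [hseq, vertexWeight]

theorem prod_vertexWeight_hseq_eq_zero {n : ℕ} {t : List Bool} {i : ℕ} (hi : i ≤ 2 * n)
    (hh : 5 ≤ hseq t i) : ∏ i ∈ Finset.range (2 * n + 1), vertexWeight (hseq t i) = 0 := by
  refine Finset.prod_eq_zero (Finset.mem_range_succ_iff.2 hi) ?_
  simp only [vertexWeight]
  grind

theorem prod_vertexWeight_hseq_eq_two_pow {n : ℕ} {t : List Bool}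
    (hh : ∀ i ≤ 2 * n, hseq t i ≤ 4) :
    ∏ i ∈ Finset.range (2 * n + 1), vertexWeight (hseq t i) = 2 ^ etaOf n t := by
  rw [etaOf, Finset.card_filter, ← Finset.prod_pow_eq_pow_sum]
  refine Finset.prod_congr rfl fun i hi => ?_
  have := hh i (Finset.mem_range_succ_iff.1 hi)
  by_cases h2 : hseq t i = 2 <;> simp [vertexWeight, h2, this]

/-! ### Matchings of a given shape -/

theorem IsPerfectMatching.mem_Icc {n : ℕ} {M : Finset (ℕ × ℕ)} (h : IsPerfectMatching n M)
    {p : ℕ × ℕ} (hp : p ∈ M) {x : ℕ} (hx : p.1 = x ∨ p.2 = x) : x ∈ Finset.Icc 1 (2 * n) := by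
  have := h.1 p hp
  rw [Finset.mem_Icc]
  omega

theorem IsPerfectMatching.eq_of_incident {n : ℕ} {M : Finset (ℕ × ℕ)} (h : IsPerfectMatching n M)
    {p q : ℕ × ℕ} (hp : p ∈ M) (hq : q ∈ M) {x : ℕ} (hpx : p.1 = x ∨ p.2 = x)
    (hqx : q.1 = x ∨ q.2 = x) : p = q :=
  have hx := Finset.mem_Icc.1 (h.mem_Icc hp hpx)
  (h.2 x hx.1 hx.2).unique ⟨hp, hpx⟩ ⟨hq, hqx⟩

theorem isPerfectMatching_iff {n : ℕ} {M : Finset (ℕ × ℕ)} :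
    IsPerfectMatching n M ↔ (∀ p ∈ M, p.1 < p.2) ∧ Set.InjOn Prod.fst (M : Set (ℕ × ℕ)) ∧
      Set.InjOn Prod.snd (M : Set (ℕ × ℕ)) ∧ Disjoint (M.image Prod.fst) (M.image Prod.snd) ∧
      M.image Prod.fst ∪ M.image Prod.snd = Finset.Icc 1 (2 * n) := by
  have hmem : ∀ {x}, x ∈ M.image Prod.fst ∪ M.image Prod.snd ↔ ∃ p ∈ M, p.1 = x ∨ p.2 = x := by
    simp only [Finset.mem_union, Finset.mem_image, and_or_left, exists_or, implies_true]
  have hdisj : Disjoint (M.image Prod.fst) (M.image Prod.snd) ↔ ∀ p ∈ M, ∀ q ∈ M, p.1 ≠ q.2 := by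
    simp only [Finset.disjoint_iff_ne, Finset.forall_mem_image]
  rw [hdisj]
  constructor
  · intro h
    refine ⟨fun p hp => (h.1 p hp).1,
      fun p hp q hq hpq => h.eq_of_incident hp hq (.inl rfl) (.inl hpq.symm),
      fun p hp q hq hpq => h.eq_of_incident hp hq (.inr rfl) (.inr hpq.symm),
      fun p hp q hq hpq => ?_, Finset.ext fun x => hmem.trans ⟨?_, fun hx => ?_⟩⟩
    · obtain rfl := h.eq_of_incident hp hq (.inl rfl) (.inr hpq.symm)
      exact (h.1 p hp).1.ne hpq
    · rintro ⟨p, hp, hpx⟩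
      exact h.mem_Icc hp hpx
    · obtain ⟨p, hp, -⟩ := h.2 x (Finset.mem_Icc.1 hx).1 (Finset.mem_Icc.1 hx).2
      exact ⟨p, hp⟩
  · rintro ⟨hlt, hfst, hsnd, hne, hunion⟩
    rw [hunion] at hmem
    refine ⟨fun p hp => ⟨hlt p hp, ?_, ?_⟩, fun x hx hx' => ?_⟩
    · exact (Finset.mem_Icc.1 (hmem.2 ⟨p, hp, .inl rfl⟩)).1
    · exact (Finset.mem_Icc.1 (hmem.2 ⟨p, hp, .inr rfl⟩)).2
    · obtain ⟨p, hp, hpx⟩ := hmem.1 (Finset.mem_Icc.2 ⟨hx, hx'⟩)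
      refine ⟨p, ⟨hp, hpx⟩, ?_⟩
      rintro q ⟨hq, hqx⟩
      rcases hpx with rfl | rfl <;> rcases hqx with hqx | hqx
      exacts [hfst hq hp hqx, absurd hqx.symm (hne p hp q hq), absurd hqx (hne q hq p hp),
        hsnd hq hp hqx]

theorem disjoint_stepPositions (x : ℕ) (t : List Bool) :
    Disjoint (stepPositions true x t) (stepPositions false x t) := by
  rw [Finset.disjoint_left]
  intro y htrue hfalse
  simpa [(mem_stepPositions.1 htrue).2] using (mem_stepPositions.1 hfalse).2

theorem stepPositions_union (x : ℕ) (t : List Bool) :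
    stepPositions true x t ∪ stepPositions false x t = Finset.Ico x (x + t.length) := by
  ext y
  simp only [Finset.mem_union, mem_stepPositions, Finset.mem_Ico, ← and_or_left]
  refine and_congr_right fun hxy => ⟨fun h => ?_, fun hy => ?_⟩
  · have hlt : y - x < t.length := by
      rcases h with h | h <;> exact (List.getElem?_eq_some_iff.1 h).1
    omega
  · rw [List.getElem?_eq_getElem (by omega)]
    cases t[y - x] <;> simp

theorem shapeOf_eq_iff {n : ℕ} {M : Finset (ℕ × ℕ)} {t : List Bool} (ht : t.length = 2 * n)
    (hM : M.image Prod.fst ⊆ Finset.Icc 1 (2 * n)) :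
    shapeOf n M = t ↔ M.image Prod.fst = stepPositions true 1 t := by
  constructor
  · rintro rfl
    ext y
    have hy : y ∈ M.image Prod.fst → 1 ≤ y ∧ y ≤ 2 * n := fun hy => Finset.mem_Icc.1 (hM hy)
    rw [mem_stepPositions, List.getElem?_eq_some_iff]
    simp only [shapeOf, List.getElem_map, List.getElem_range, List.length_map, List.length_range,
      decide_eq_true_eq, exists_prop]
    constructor
    · intro h
      have := hy h
      rw [Nat.sub_add_cancel this.1]
      exact ⟨this.1, by omega, h⟩
    · rintro ⟨hpos, -, h⟩
      rwa [Nat.sub_add_cancel hpos] at h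
  · intro h
    refine List.ext_getElem (by simp [shapeOf, ht]) fun i _ hi => ?_
    simp [shapeOf, h, mem_stepPositions, List.getElem?_eq_getElem hi]

theorem isCompletion_nil_iff {n : ℕ} {M : Finset (ℕ × ℕ)} {t : List Bool}
    (ht : t.length = 2 * n) :
    IsCompletion 1 t [] M ↔ IsPerfectMatching n M ∧ shapeOf n M = t := by
  have hunion : stepPositions true 1 t ∪ stepPositions false 1 t = Finset.Icc 1 (2 * n) := by
    rw [stepPositions_union, ht, add_comm]
    rfl
  have hdisj := disjoint_stepPositions 1 t
  rw [isPerfectMatching_iff]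
  constructor
  · rintro ⟨hlt, hfst, hsnd, hopen, hclose, -⟩
    rw [List.toFinset_nil, Finset.empty_union] at hopen
    rw [← hopen, ← hclose] at hunion hdisj
    exact ⟨⟨hlt, hfst, hsnd, hdisj, hunion⟩,
      (shapeOf_eq_iff ht (hunion ▸ Finset.subset_union_left)).2 hopen⟩
  · rintro ⟨⟨hlt, hfst, hsnd, hdisj', hunion'⟩, hshape⟩
    have hopen := (shapeOf_eq_iff ht (hunion' ▸ Finset.subset_union_left)).1 hshape
    refine ⟨hlt, hfst, hsnd, by simpa using hopen, ?_, List.Pairwise.nil⟩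
    rw [← Finset.union_sdiff_cancel_left hdisj', hunion', ← hunion, hopen,
      Finset.union_sdiff_cancel_left hdisj]

theorem ncard_avoiding_of_shape {n : ℕ} {t : List Bool} (ht : t.length = 2 * n) :
    {M : Finset (ℕ × ℕ) | IsPerfectMatching n M ∧ MatchAvoids p123 M ∧ MatchAvoids p321 M ∧
      shapeOf n M = t}.ncard = pathWeight t 0 := by
  rw [← (countedByWeight 1 t).nil, ← Set.ncard_coe_finset]
  congr 1
  ext M
  rw [Finset.mem_coe, mem_completions, isCompletion_nil_iff ht, avoidsMonotoneTriples_iff,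
    Set.mem_ofPred_eq]
  tauto

/-! ### The total number of matchings -/

/-- The sum of `pathWeight t h` over all words `t` of length `m`. -/
def totalWeight (m h : ℕ) : ℕ := ∑ f : Fin m → Bool, pathWeight (List.ofFn f) h

theorem totalWeight_zero (h : ℕ) : totalWeight 0 h = if h = 0 then 1 else 0 := by
  simp [totalWeight, pathWeight]

theorem totalWeight_succ (m h : ℕ) :
    totalWeight (m + 1) h = ∑ f : Fin m → Bool, pathWeight (true :: List.ofFn f) h +
      ∑ f : Fin m → Bool, pathWeight (false :: List.ofFn f) h := by
  rw [totalWeight, ← (Fin.consEquiv fun _ => Bool).sum_comp, Fintype.sum_prod_type,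
    Fintype.sum_bool]
  simp [Fin.consEquiv]

theorem totalWeight_succ_zero (m : ℕ) : totalWeight (m + 1) 0 = totalWeight m 1 := by
  rw [totalWeight_succ]
  simp [pathWeight, vertexWeight, totalWeight]

theorem totalWeight_succ_succ (m h : ℕ) : totalWeight (m + 1) (h + 1) =
    vertexWeight (h + 2) * totalWeight m (h + 2) + vertexWeight h * totalWeight m h := by
  rw [totalWeight_succ]
  simp [pathWeight, totalWeight, Finset.mul_sum]

/-- Two steps act on the weights at the heights `0`, `2`, `4` by a matrix for which `(1, 2, 1)` and
`(1, 0, -1)` are eigenvectors with the eigenvalues `5` and `1`. -/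
theorem totalWeight_two_mul_succ (n : ℕ) :
    2 * totalWeight (2 * (n + 1)) 0 = 5 ^ n + 1 ∧ totalWeight (2 * (n + 1)) 2 = 5 ^ n ∧
      2 * totalWeight (2 * (n + 1)) 4 + 1 = 5 ^ n := by
  induction n with
  | zero => simp [totalWeight_succ_zero, totalWeight_succ_succ, totalWeight_zero, vertexWeight]
  | succ n ih =>
    rw [mul_add 2 (n + 1) 1, mul_one]
    simp only [totalWeight_succ_zero, totalWeight_succ_succ, vertexWeight, Nat.reduceAdd,
      Nat.reduceEqDiff, Nat.reduceLeDiff, if_true, if_false, pow_succ]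
    omega

theorem mcount2_eq_totalWeight (n : ℕ) : mcount2 p123 p321 n = totalWeight (2 * n) 0 := by
  have hlen : ∀ f : Fin (2 * n) → Bool, (List.ofFn f).length = 2 * n := fun f => List.length_ofFn
  have hset : {M : Finset (ℕ × ℕ) | IsPerfectMatching n M ∧ MatchAvoids p123 M ∧
      MatchAvoids p321 M} = (Finset.univ.biUnion fun f : Fin (2 * n) → Bool =>
        completions 1 (List.ofFn f) [] : Set (Finset (ℕ × ℕ))) := by
    ext M
    simp only [Finset.coe_biUnion, Set.mem_iUnion, Finset.mem_coe, mem_completions,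
      isCompletion_nil_iff (hlen _), avoidsMonotoneTriples_iff, Set.mem_ofPred_eq,
      Finset.mem_univ, exists_prop, true_and]
    constructor
    · rintro ⟨hM, hav⟩
      have hshape : (shapeOf n M).length = 2 * n := by simp [shapeOf]
      obtain ⟨f, hf⟩ : ∃ f : Fin (2 * n) → Bool, List.ofFn f = shapeOf n M :=
        hshape ▸ ⟨_, List.ofFn_getElem⟩
      exact ⟨f, ⟨hM, hf.symm⟩, hav⟩
    · rintro ⟨f, ⟨hM, -⟩, hav⟩
      exact ⟨hM, hav⟩
  rw [mcount2, hset, Set.ncard_coe_finset, Finset.card_biUnion, totalWeight]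
  · exact Finset.sum_congr rfl fun f _ => (countedByWeight 1 _).nil
  · refine fun f _ g _ hfg => Finset.disjoint_left.2 fun M hf hg => hfg (List.ofFn_injective ?_)
    rw [mem_completions, isCompletion_nil_iff (hlen _)] at hf hg
    exact hf.1.2.symm.trans hg.1.2

theorem mcount2_zero : mcount2 p123 p321 0 = 1 := by
  rw [mcount2_eq_totalWeight, mul_zero, totalWeight_zero, if_pos rfl]

theorem two_mul_mcount2_succ (n : ℕ) : 2 * mcount2 p123 p321 (n + 1) = 5 ^ n + 1 := by
  rw [mcount2_eq_totalWeight, (totalWeight_two_mul_succ n).1]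

theorem mcount2_add_three (n : ℕ) :
    mcount2 p123 p321 (n + 3) + 5 * mcount2 p123 p321 (n + 1) = 6 * mcount2 p123 p321 (n + 2) := by
  have h₁ := two_mul_mcount2_succ n
  have h₂ := two_mul_mcount2_succ (n + 1)
  have h₃ := two_mul_mcount2_succ (n + 2)
  rw [pow_succ] at h₂
  rw [pow_add] at h₃
  simp only [add_assoc, Nat.reduceAdd] at h₁ h₂ h₃
  omega

open PowerSeries in
theorem mk_mul_eq_of_linear_recurrence {R : Type*} [CommRing R] {a : ℕ → R} {p q : R}
    (ha : ∀ n, a (n + 3) + q * a (n + 1) = p * a (n + 2)) :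
    mk a * (1 - C p * X + C q * X ^ 2) =
      C (a 0) + C (a 1 - p * a 0) * X + C (a 2 - p * a 1 + q * a 0) * X ^ 2 := by
  ext n
  have hmul : mk a * (1 - C p * X + C q * X ^ 2) =
      mk a - C p * (mk a * X) + C q * (mk a * X ^ 2) := by
    ring
  rw [hmul]
  rcases n with - | - | - | n
  · simp
  · simp [coeff_mul_X_pow', coeff_succ_mul_X]
  · simp [coeff_mul_X_pow', coeff_succ_mul_X]
  · simp only [map_add, map_sub, coeff_mk, coeff_C_mul, coeff_succ_mul_X, coeff_mul_X_pow',
      le_add_iff_nonneg_left, zero_le, ↓reduceIte, Nat.reduceSubDiff, map_mul, coeff_succ_C,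
      coeff_mul_C, zero_mul, sub_self, add_zero]
    linear_combination ha n

theorem mk_mcount2_mul :
    (PowerSeries.mk fun n => (mcount2 p123 p321 n : ℚ)) *
        (1 - 6 * PowerSeries.X + 5 * PowerSeries.X ^ 2) =
      1 - 5 * PowerSeries.X + 2 * PowerSeries.X ^ 2 := by
  have h₁ : (2 * mcount2 p123 p321 1 : ℚ) = 2 := mod_cast two_mul_mcount2_succ 0
  have h₂ : (2 * mcount2 p123 p321 2 : ℚ) = 6 := mod_cast two_mul_mcount2_succ 1
  have hrec : ∀ n, (mcount2 p123 p321 (n + 3) : ℚ) + 5 * mcount2 p123 p321 (n + 1) =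
      6 * mcount2 p123 p321 (n + 2) := fun n => mod_cast mcount2_add_three n
  have h := mk_mul_eq_of_linear_recurrence (a := fun n => (mcount2 p123 p321 n : ℚ)) hrec
  have hlin : (mcount2 p123 p321 1 - 6 * mcount2 p123 p321 0 : ℚ) = -5 := by
    rw [mcount2_zero, Nat.cast_one]
    linarith
  have hquad : (mcount2 p123 p321 2 - 6 * mcount2 p123 p321 1 + 5 * mcount2 p123 p321 0 : ℚ) =
      2 := by
    rw [mcount2_zero, Nat.cast_one]
    linarith
  rw [hlin, hquad, mcount2_zero] at h
  simp only [map_ofNat, map_neg, Nat.cast_one, map_one] at h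
  rw [h]
  ring

/-- For `F ∈ F_n`: if some height `h_i ≥ 5` then `M_F(123,321) = ∅`, and
if all heights are `≤ 4` then `|M_F(123,321)| = 2^{η(F)}`. Consequently
`|M_n(123,321)| = (5^{n−1}+1)/2` for `n ≥ 1`, and
`Σ_{n≥0}|M_n(123,321)| zⁿ = (1−5z+2z²)/(1−6z+5z²)`. -/
theorem matchings_avoiding_123_321 :
    (∀ n : ℕ, 0 < n → ∀ t : List Bool, IsDyckPath n t →
      ((∃ i, i ≤ 2 * n ∧ 5 ≤ hseq t i) →
        {M : Finset (ℕ × ℕ) | IsPerfectMatching n M ∧ MatchAvoids p123 M ∧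
            MatchAvoids p321 M ∧ shapeOf n M = t}.ncard = 0) ∧
      ((∀ i, i ≤ 2 * n → hseq t i ≤ 4) →
        {M : Finset (ℕ × ℕ) | IsPerfectMatching n M ∧ MatchAvoids p123 M ∧
            MatchAvoids p321 M ∧ shapeOf n M = t}.ncard = 2 ^ etaOf n t)) ∧
    (∀ n : ℕ, 1 ≤ n → 2 * mcount2 p123 p321 n = 5 ^ (n - 1) + 1) ∧
    (PowerSeries.mk fun n => (mcount2 p123 p321 n : ℚ)) *
        (1 - 6 * PowerSeries.X + 5 * PowerSeries.X ^ 2) =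
      1 - 5 * PowerSeries.X + 2 * PowerSeries.X ^ 2 := by
  have hcount : ∀ n t, IsDyckPath n t → {M : Finset (ℕ × ℕ) | IsPerfectMatching n M ∧
      MatchAvoids p123 M ∧ MatchAvoids p321 M ∧ shapeOf n M = t}.ncard =
      ∏ i ∈ Finset.range (2 * n + 1), vertexWeight (hseq t i) := fun n t ht =>
    (ncard_avoiding_of_shape ht.1).trans (pathWeight_zero_eq_prod_hseq ht)
  refine ⟨fun n _ t ht => ⟨?_, fun hle => ?_⟩, fun n hn => ?_, mk_mcount2_mul⟩
  · rintro ⟨i, hi, hh⟩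
    rw [hcount n t ht, prod_vertexWeight_hseq_eq_zero hi hh]
  · rw [hcount n t ht, prod_vertexWeight_hseq_eq_two_pow hle]
  · obtain ⟨m, rfl⟩ := Nat.exists_eq_add_of_le' hn
    exact two_mul_mcount2_succ m
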